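/- Let X be a chordal bipartite graph whose vertex set is partitioned into three pairwise disjoint sets Δ, Γ, Λ with Δ nonempty, such that every edge of X joins Δ to Γ∪Λ (i.e., X is bipartite with parts Δ and Γ∪Λ). Suppose every vertex of Δ has at least one neighbor in Γ and at least one neighbor in Λ. Then there exist vertices β ∈ Γ and λ ∈ Λ, each with nonempty neighborhood, such that N(β) ⊆ N(λ) or N(λ) ⊆ N(β), where N denotes the neighborhood in X. -/

import Mathlib

open SimpleGraph

/-- `P`, `Q` form a bipartition of the graph `X`. -/
def IsBipartition {V : Type*} (X : SimpleGraph V) (P Q : Set V) : Prop :=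
  (∀ v, v ∈ P ∨ v ∈ Q) ∧ Disjoint P Q ∧
    ∀ u v, X.Adj u v → (u ∈ P ∧ v ∈ Q) ∨ (u ∈ Q ∧ v ∈ P)

/-- `X` contains no induced cycle of length at least 6. -/
def NoLongInducedCycle {V : Type*} (X : SimpleGraph V) : Prop :=
  ∀ n : ℕ, 6 ≤ n → IsEmpty (SimpleGraph.cycleGraph n ↪g X)

/-!
If `ab` is a bisimplicial edge with `a ∈ Δ`, then `N(b) ⊆ N(c)` for every neighbor `c` of `a`, so
it suffices to find such an edge. Take a maximal connected set `C` whose closed neighborhood misses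
some edge, and let `F` be the complement of that closed neighborhood. By maximality, a vertex
outside `C` with a neighbor in `C` is adjacent to an end of every edge of `F`. If `s` and `t` are
two such vertices, adjacent to the ends `a` and `b` of an edge of `F`, then they are adjacent to
each other: otherwise a shortest path from `s` to `b` in `C ∪ {s, t, b}` closes up through `a` to
a long induced cycle. Hence a bisimplicial edge of the subgraph induced on `F` is bisimplicial in
the whole graph, and induction applies. If no such `C` exists, every edge is bisimplicial.
-/

section

variable {V : Type*} {X : SimpleGraph V} {C T : Set V} {a b c s t u v : V}

lemma cycleGraph_adj_iff_of_lt {n : ℕ} {i j : Fin n} (hij : i < j) :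
    (cycleGraph n).Adj i j ↔ i.val + 1 = j.val ∨ i.val = 0 ∧ j.val + 1 = n := by
  have h_sub : (j - i).val = j.val - i.val := Fin.sub_val_of_le hij.le
  have h_sub' : (i - j).val = n + i.val - j.val := Fin.coe_sub_iff_lt.2 hij
  rw [cycleGraph_adj', h_sub, h_sub']
  lia

lemma cycleGraph_adj_zero_succ {n : ℕ} (i : Fin (n + 1)) :
    (cycleGraph (n + 2)).Adj 0 i.succ ↔ i = 0 ∨ i = Fin.last n := by
  rw [cycleGraph_adj_iff_of_lt i.succ_pos, Fin.val_zero, Fin.val_succ, Fin.ext_iff, Fin.ext_iff,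
    Fin.val_zero, Fin.val_last]
  lia

lemma cycleGraph_adj_succ_succ {n : ℕ} (i j : Fin (n + 1)) :
    (cycleGraph (n + 2)).Adj i.succ j.succ ↔ (pathGraph (n + 1)).Adj i j := by
  wlog hle : i ≤ j generalizing i j
  · rw [adj_comm, (pathGraph _).adj_comm]
    exact this j i (le_of_not_ge hle)
  obtain rfl | hlt := hle.eq_or_lt
  · simp
  · rw [cycleGraph_adj_iff_of_lt (Fin.succ_lt_succ_iff.2 hlt), pathGraph_adj, Fin.val_succ,
      Fin.val_succ]
    lia

theorem nonempty_cycleGraph_embedding_of_pathGraph_embedding {n : ℕ}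
    (φ : pathGraph (n + 1) ↪g X) (hv : v ∉ Set.range φ)
    (hadj : ∀ i, X.Adj v (φ i) ↔ i = 0 ∨ i = Fin.last n) :
    Nonempty (cycleGraph (n + 2) ↪g X) := by
  let ψ : Fin (n + 2) → V := Fin.cons v φ
  refine ⟨⟨⟨ψ, Fin.cons_injective_iff.2 ⟨hv, φ.injective⟩⟩, fun {i j} ↦ ?_⟩⟩
  change X.Adj (ψ i) (ψ j) ↔ _
  cases i using Fin.cases <;> cases j using Fin.cases
  · simp
  · simp only [ψ, Fin.cons_zero, Fin.cons_succ, hadj, cycleGraph_adj_zero_succ]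
  · rw [X.adj_comm, (cycleGraph _).adj_comm]
    simp only [ψ, Fin.cons_zero, Fin.cons_succ, hadj, cycleGraph_adj_zero_succ]
  · simp only [ψ, Fin.cons_succ, φ.map_adj_iff, cycleGraph_adj_succ_succ]

lemma dist_getVert_getVert_of_length_eq_dist {p : X.Walk u v} (hp : p.length = X.dist u v)
    {i j : ℕ} (hij : i ≤ j) (hj : j ≤ p.length) :
    X.dist (p.getVert i) (p.getVert j) = j - i := by
  have hsub := length_eq_dist_of_subwalk hp
    (((p.take j).isSubwalk_drop i).trans (p.isSubwalk_take j))
  simpa [Walk.take_getVert, hij, hj] using hsub.symm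

theorem exists_pathGraph_embedding_of_reachable (h : X.Reachable u v) :
    ∃ φ : pathGraph (X.dist u v + 1) ↪g X, φ 0 = u ∧ φ (Fin.last _) = v := by
  obtain ⟨p, hp⟩ := h.exists_walk_length_eq_dist
  have hdist (i j : Fin (X.dist u v + 1)) (hij : i ≤ j) :
      X.dist (p.getVert i) (p.getVert j) = j - i :=
    dist_getVert_getVert_of_length_eq_dist hp hij (by lia)
  refine ⟨⟨⟨fun i ↦ p.getVert i, fun i j hij ↦ ?_⟩, fun {i j} ↦ ?_⟩, p.getVert_zero, ?_⟩
  · wlog hle : i ≤ j generalizing i j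
    · exact (this j i hij.symm (le_of_not_ge hle)).symm
    have hzero := hdist i j hle
    rw [show p.getVert i = p.getVert j from hij, SimpleGraph.dist_self] at hzero
    lia
  · change X.Adj (p.getVert i) (p.getVert j) ↔ _
    wlog hle : i ≤ j generalizing i j
    · rw [X.adj_comm, (pathGraph _).adj_comm]
      exact this (le_of_not_ge hle)
    rw [← dist_eq_one_iff_adj, hdist i j hle, pathGraph_adj]
    lia
  · change p.getVert (X.dist u v) = v
    rw [← hp, p.getVert_length]

theorem nonempty_cycleGraph_embedding_of_neighborSet_inter_eq_pair
    {s t : T} (hst : (X.induce T).Reachable s t) (hv : v ∉ T)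
    (hN : X.neighborSet v ∩ T = {↑s, ↑t}) :
    Nonempty (cycleGraph ((X.induce T).dist s t + 2) ↪g X) := by
  obtain ⟨φ, h_zero, h_last⟩ := exists_pathGraph_embedding_of_reachable hst
  refine nonempty_cycleGraph_embedding_of_pathGraph_embedding
    (φ := (Embedding.induce T).comp φ) (v := v) ?_ fun i ↦ ?_
  · rintro ⟨i, rfl⟩
    exact hv (φ i).2
  · calc X.Adj v (φ i)
      _ ↔ (φ i : V) ∈ X.neighborSet v ∩ T := by simp
      _ ↔ φ i = s ∨ φ i = t := by simp [hN, Subtype.ext_iff]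
      _ ↔ φ i = φ 0 ∨ φ i = φ (Fin.last _) := by rw [h_zero, h_last]
      _ ↔ i = 0 ∨ i = Fin.last _ := by rw [φ.injective.eq_iff, φ.injective.eq_iff]

lemma connected_induce_insert (hC : (X.induce C).Connected) (hc : c ∈ C) (hcs : X.Adj c s) :
    (X.induce (insert s C)).Connected := by
  rw [Set.insert_eq]
  exact connected_induce_union .of_subsingleton hC.preconnected rfl hc hcs.symm

lemma not_adj_of_cliqueFree_three (hX : X.CliqueFree 3) (hab : X.Adj a b) (hbc : X.Adj b c) :
    ¬ X.Adj a c := by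
  classical
  exact fun hac ↦ hX {a, b, c} (is3Clique_triple_iff.2 ⟨hab, hac, hbc⟩)

/-- Chordal bipartite graphs: bipartite graphs whose induced cycles all have length four. -/
structure IsChordalBipartite (X : SimpleGraph V) : Prop where
  isBipartite : X.IsBipartite
  noLongInducedCycle : NoLongInducedCycle X

namespace IsChordalBipartite

lemma induce (hX : IsChordalBipartite X) (T : Set V) : IsChordalBipartite (X.induce T) where
  isBipartite := hX.isBipartite.of_hom (Embedding.induce T).toHom
  noLongInducedCycle n hn :=
    ⟨fun φ ↦ (hX.noLongInducedCycle n hn).false ((Embedding.induce T).comp φ)⟩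

lemma cliqueFree_three (hX : IsChordalBipartite X) : X.CliqueFree 3 :=
  hX.isBipartite.cliqueFree (by decide)

lemma isEmpty_cycleGraph_embedding (hX : IsChordalBipartite X) {n : ℕ} (hn : 5 ≤ n) :
    IsEmpty (cycleGraph n ↪g X) := by
  obtain rfl | hn := hn.eq_or_lt
  · refine ⟨fun φ ↦ ?_⟩
    have hle := (hX.isBipartite.of_hom φ.toHom).chromaticNumber_le
    rw [chromaticNumber_cycleGraph_of_odd 5 (by decide) (by decide)] at hle
    exact absurd hle (by decide)
  · exact hX.noLongInducedCycle n hn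

theorem exists_mem_adj_adj_of_neighborSet_inter_eq_pair (hX : IsChordalBipartite X)
    (hT : (X.induce T).Preconnected) (hv : v ∉ T)
    (hN : X.neighborSet v ∩ T = {s, t}) (hst : s ≠ t) :
    ∃ w ∈ T, X.Adj s w ∧ X.Adj w t := by
  have hs : s ∈ X.neighborSet v ∩ T := hN ▸ Set.mem_insert s {t}
  have ht : t ∈ X.neighborSet v ∩ T := hN ▸ Set.mem_insert_of_mem s rfl
  lift s to T using hs.2
  lift t to T using ht.2
  have hadj : ¬ X.Adj s t := not_adj_of_cliqueFree_three hX.cliqueFree_three hs.1.symm ht.1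
  obtain ⟨φ⟩ := nonempty_cycleGraph_embedding_of_neighborSet_inter_eq_pair (hT s t) hv hN
  have hle : (X.induce T).dist s t ≤ 2 := by
    by_contra! hlt
    exact (hX.isEmpty_cycleGraph_embedding (by lia)).false φ
  have hlt : 1 < (X.induce T).dist s t :=
    (hT s t).one_lt_dist_of_ne_of_not_adj (ne_of_apply_ne _ hst) hadj
  have hedist : (X.induce T).edist s t = 2 := by
    rw [← (hT s t).coe_dist_eq_edist, show (X.induce T).dist s t = 2 by lia, Nat.cast_ofNat]
  obtain ⟨w, hsw, htw⟩ := (edist_eq_two_iff.1 hedist).2.2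
  exact ⟨w, w.2, hsw, htw.symm⟩

end IsChordalBipartite

/-- A bisimplicial edge: an edge `ab` such that every neighbor of `a` is adjacent to every neighbor
of `b`. -/
structure IsBisimplicial (X : SimpleGraph V) (a b : V) : Prop where
  adj : X.Adj a b
  isCompleteBetween : X.IsCompleteBetween (X.neighborSet a) (X.neighborSet b)

namespace IsBisimplicial

lemma symm (h : IsBisimplicial X a b) : IsBisimplicial X b a :=
  ⟨h.adj.symm, h.isCompleteBetween.symm⟩

lemma neighborSet_subset (h : IsBisimplicial X a b) (hac : X.Adj a c) :
    X.neighborSet b ⊆ X.neighborSet c :=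
  fun _ hb ↦ h.isCompleteBetween hac hb

end IsBisimplicial

/-- The complement of the closed neighborhood of `C`: the vertices that neither belong to `C` nor
have a neighbor in `C`. -/
def farSet (X : SimpleGraph V) (C : Set V) : Set V :=
  {v | v ∉ C ∧ ∀ c ∈ C, ¬ X.Adj c v}

/-- A connected vertex set whose closed neighborhood misses both ends of some edge. A maximal
such set drives the induction that produces a bisimplicial edge. -/
structure AvoidsEdge (X : SimpleGraph V) (C : Set V) : Prop where
  connected : (X.induce C).Connected
  exists_adj : ∃ a ∈ farSet X C, ∃ b ∈ farSet X C, X.Adj a b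

lemma notMem_of_adj_of_mem_farSet (ha : a ∈ farSet X C) (has : X.Adj a s) : s ∉ C :=
  fun hs ↦ ha.2 s hs has.symm

lemma mem_farSet_or_exists_adj (hs : s ∉ C) : s ∈ farSet X C ∨ ∃ c ∈ C, X.Adj c s := by
  by_cases h : ∃ c ∈ C, X.Adj c s
  · exact .inr h
  · exact .inl ⟨hs, by simpa using h⟩

lemma mem_farSet_insert (ha : a ∈ farSet X C) (hne : a ≠ s) (hsa : ¬ X.Adj s a) :
    a ∈ farSet X (insert s C) :=
  ⟨by simp [hne, ha.1], by simpa [hsa] using ha.2⟩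

lemma ne_of_mem_farSet (ha : a ∈ farSet X C) (hc : c ∈ C) (hcs : X.Adj c s) : a ≠ s :=
  fun has ↦ ha.2 c hc (has ▸ hcs)

theorem adj_or_adj_of_maximal_avoidsEdge (hC : Maximal (AvoidsEdge X) C)
    (ha : a ∈ farSet X C) (hb : b ∈ farSet X C) (hab : X.Adj a b)
    (hs : s ∉ C) (hc : c ∈ C) (hcs : X.Adj c s) : X.Adj s a ∨ X.Adj s b := by
  by_contra! ⟨hsa, hsb⟩
  have hinsert : AvoidsEdge X (insert s C) :=
    ⟨connected_induce_insert hC.prop.connected hc hcs,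
      a, mem_farSet_insert ha (ne_of_mem_farSet ha hc hcs) hsa,
      b, mem_farSet_insert hb (ne_of_mem_farSet hb hc hcs) hsb, hab⟩
  exact hs (hC.le_of_ge hinsert (Set.subset_insert s C) (Set.mem_insert s C))

theorem IsChordalBipartite.adj_of_exists_adj_of_mem_farSet (hX : IsChordalBipartite X)
    (hC : (X.induce C).Connected) (ha : a ∈ farSet X C) (hb : b ∈ farSet X C) (hab : X.Adj a b)
    (hs : ∃ c ∈ C, X.Adj c s) (ht : ∃ c ∈ C, X.Adj c t) (has : X.Adj a s) (hbt : X.Adj b t) :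
    X.Adj s t := by
  obtain ⟨c, hc, hcs⟩ := hs
  obtain ⟨d, hd, hdt⟩ := ht
  set T : Set V := insert b (insert t (insert s C)) with hT
  have hTconn : (X.induce T).Connected :=
    connected_induce_insert (connected_induce_insert (connected_induce_insert hC hc hcs)
      (Set.mem_insert_of_mem s hd) hdt) (Set.mem_insert t _) hbt.symm
  have hat : ¬ X.Adj a t := not_adj_of_cliqueFree_three hX.cliqueFree_three hab hbt
  have hbs : ¬ X.Adj b s := not_adj_of_cliqueFree_three hX.cliqueFree_three hab.symm has
  have haC (w : V) (hw : w ∈ C) : ¬ X.Adj a w := fun h ↦ ha.2 w hw h.symm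
  have haT : a ∉ T := by
    simp [hT, hab.ne, ne_of_mem_farSet ha hd hdt, ne_of_mem_farSet ha hc hcs, ha.1]
  have hN : X.neighborSet a ∩ T = {s, b} := by
    ext w
    simp only [hT, Set.mem_inter_iff, mem_neighborSet, Set.mem_insert_iff,
      Set.mem_singleton_iff]
    grind
  obtain ⟨w, hw, hsw, hwb⟩ := hX.exists_mem_adj_adj_of_neighborSet_inter_eq_pair
    hTconn.preconnected haT hN (ne_of_mem_farSet hb hc hcs).symm
  obtain rfl | rfl | rfl | hw := hw
  · exact (hwb.ne rfl).elim
  · exact hsw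
  · exact (hsw.ne rfl).elim
  · exact (hb.2 w hw hwb).elim

theorem IsChordalBipartite.isBisimplicial_of_induce_farSet (hX : IsChordalBipartite X)
    (hC : Maximal (AvoidsEdge X) C) {a b : farSet X C}
    (hab : IsBisimplicial (X.induce (farSet X C)) a b) : IsBisimplicial X a b := by
  have habX : X.Adj a b := hab.adj
  refine ⟨habX, fun s (has : X.Adj a s) t (hbt : X.Adj b t) ↦ ?_⟩
  have hsC : s ∉ C := notMem_of_adj_of_mem_farSet a.2 has
  have htC : t ∉ C := notMem_of_adj_of_mem_farSet b.2 hbt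
  have hat : ¬ X.Adj a t := not_adj_of_cliqueFree_three hX.cliqueFree_three habX hbt
  have hbs : ¬ X.Adj b s := not_adj_of_cliqueFree_three hX.cliqueFree_three habX.symm has
  obtain hs | ⟨c, hc, hcs⟩ := mem_farSet_or_exists_adj (X := X) hsC <;>
    obtain ht | ⟨d, hd, hdt⟩ := mem_farSet_or_exists_adj (X := X) htC
  · lift s to farSet X C using hs
    lift t to farSet X C using ht
    exact hab.isCompleteBetween has hbt
  · obtain hta | hts := adj_or_adj_of_maximal_avoidsEdge hC a.2 hs has htC hd hdt
    · exact (hat hta.symm).elim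
    · exact hts.symm
  · obtain hsb | hst := adj_or_adj_of_maximal_avoidsEdge hC b.2 ht hbt hsC hc hcs
    · exact (hbs hsb.symm).elim
    · exact hst
  · exact hX.adj_of_exists_adj_of_mem_farSet hC.prop.connected a.2 b.2 habX ⟨c, hc, hcs⟩
      ⟨d, hd, hdt⟩ has hbt

theorem isBisimplicial_of_forall_not_avoidsEdge (hX : X.CliqueFree 3)
    (h : ∀ C, ¬ AvoidsEdge X C) (hab : X.Adj a b) : IsBisimplicial X a b := by
  refine ⟨hab, fun s (has : X.Adj a s) t (hbt : X.Adj b t) ↦ ?_⟩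
  by_contra hst
  have hta : ¬ X.Adj t a := not_adj_of_cliqueFree_three hX hbt.symm hab.symm
  have hne_a : a ≠ t := fun hat ↦ hst (hat ▸ has.symm)
  have hne_s : s ≠ t := fun hat ↦ not_adj_of_cliqueFree_three hX hab hbt (hat ▸ has)
  refine h {t} ⟨⟨.of_subsingleton⟩, a, ⟨hne_a, by simpa⟩, s, ⟨hne_s, ?_⟩, has⟩
  simpa [X.adj_comm] using hst

theorem IsChordalBipartite.exists_isBisimplicial {V : Type*} [Finite V] {X : SimpleGraph V}
    (hX : IsChordalBipartite X) (hne : X ≠ ⊥) : ∃ a b, IsBisimplicial X a b := by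
  by_cases h : ∃ C, AvoidsEdge X C
  · obtain ⟨C₀, hC₀⟩ := h
    obtain ⟨C, -, hC⟩ := Finite.exists_le_maximal hC₀
    obtain ⟨a, ha, b, hb, hab⟩ := hC.prop.exists_adj
    have : Nat.card (farSet X C) < Nat.card V := by
      obtain ⟨c⟩ := hC.prop.connected.nonempty
      exact Finite.card_subtype_lt (x := c.1) fun hfar ↦ hfar.1 c.2
    obtain ⟨a', b', hab'⟩ := (hX.induce (farSet X C)).exists_isBisimplicial
      (ne_bot_iff_exists_adj.2 ⟨⟨a, ha⟩, ⟨b, hb⟩, hab⟩)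
    exact ⟨a', b', hX.isBisimplicial_of_induce_farSet hC hab'⟩
  · obtain ⟨a, b, hab⟩ := ne_bot_iff_exists_adj.1 hne
    exact ⟨a, b, isBisimplicial_of_forall_not_avoidsEdge hX.cliqueFree_three (by simpa using h) hab⟩
termination_by Nat.card V

end

theorem stmt_10 {V : Type*} [Fintype V] (X : SimpleGraph V) (Δ Γ Λ : Set V)
    (hdisjΔΓ : Disjoint Δ Γ) (hdisjΔΛ : Disjoint Δ Λ) (hdisjΓΛ : Disjoint Γ Λ)
    (hcover : ∀ v, v ∈ Δ ∨ v ∈ Γ ∨ v ∈ Λ)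
    (hΔne : Δ.Nonempty)
    (hbip : ∀ u v, X.Adj u v →
      (u ∈ Δ ∧ (v ∈ Γ ∨ v ∈ Λ)) ∨ (v ∈ Δ ∧ (u ∈ Γ ∨ u ∈ Λ)))
    (hchordal : NoLongInducedCycle X)
    (hnbrΓ : ∀ u ∈ Δ, ∃ v ∈ Γ, X.Adj u v)
    (hnbrΛ : ∀ u ∈ Δ, ∃ v ∈ Λ, X.Adj u v) :
    ∃ β ∈ Γ, ∃ lam ∈ Λ, (X.neighborSet β).Nonempty ∧ (X.neighborSet lam).Nonempty ∧
      (X.neighborSet β ⊆ X.neighborSet lam ∨ X.neighborSet lam ⊆ X.neighborSet β) := by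
  have hbipart : X.IsBipartiteWith Δ (Γ ∪ Λ) := by
    refine ⟨hdisjΔΓ.union_right hdisjΔΛ, fun u v huv ↦ ?_⟩
    exact (hbip u v huv).imp_right And.symm
  have hX : IsChordalBipartite X := ⟨hbipart.isBipartite, hchordal⟩
  have hne : X ≠ ⊥ := by
    obtain ⟨u, hu⟩ := hΔne
    obtain ⟨v, -, huv⟩ := hnbrΓ u hu
    exact ne_bot_iff_exists_adj.2 ⟨u, v, huv⟩
  obtain ⟨a, b, ha, hab⟩ : ∃ a b, a ∈ Δ ∧ IsBisimplicial X a b := by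
    obtain ⟨a, b, hab⟩ := hX.exists_isBisimplicial hne
    obtain ⟨ha, -⟩ | ⟨-, hb⟩ := hbipart.mem_of_adj hab.adj
    · exact ⟨a, b, ha, hab⟩
    · exact ⟨b, a, hb, hab.symm⟩
  obtain hb | hb := hbipart.mem_of_mem_adj ha hab.adj
  · obtain ⟨c, hc, hac⟩ := hnbrΛ a ha
    exact ⟨b, hb, c, hc, ⟨a, hab.adj.symm⟩, ⟨a, hac.symm⟩, .inl (hab.neighborSet_subset hac)⟩
  · obtain ⟨c, hc, hac⟩ := hnbrΓ a ha
    exact ⟨c, hc, b, hb, ⟨a, hac.symm⟩, ⟨a, hab.adj.symm⟩, .inr (hab.neighborSet_subset hac)⟩
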